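/- arXiv:2508.19211 — 2 statements merged into one kernel-verified Lean document; each statement's English description precedes it below -/
import Mathlib

section
/- Let ℓ be an odd prime different from char(K) and suppose ζ_ℓ ∈ K. Set Γ_{ℓ,E} := Γ_ℓ ∩ K(W_ℓ)^×. Then K(Γ_ℓ) ∩ K(W_ℓ) = K(Γ_{ℓ,E}) and [K(Γ):K] = |Γ_ℓ : K^×| · [K(W_ℓ):K] / |Γ_{ℓ,E} : K^×|. -/
noncomputable section

open IntermediateField

/-- `K^×` viewed as a subgroup of the units of the algebraic closure of `K`. -/
def baseUnits (K : Type*) [Field K] : Subgroup (AlgebraicClosure K)ˣ :=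
  (Units.map (algebraMap K (AlgebraicClosure K)).toMonoidHom).range

/-- The subgroup of `(AlgebraicClosure K)ˣ` of elements whose `m`-th power lies in `K^×`. -/
def radGroup (K : Type*) [Field K] (m : ℕ) : Subgroup (AlgebraicClosure K)ˣ where
  carrier := {x | ∃ y : K, algebraMap K (AlgebraicClosure K) y = (x : AlgebraicClosure K) ^ m}
  one_mem' := ⟨1, by simp⟩
  mul_mem' := by
    rintro a b ⟨y, hy⟩ ⟨z, hz⟩
    exact ⟨y * z, by rw [map_mul, hy, hz, Units.val_mul, mul_pow]⟩
  inv_mem' := by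
    rintro a ⟨y, hy⟩
    refine ⟨y⁻¹, ?_⟩
    rw [map_inv₀, hy, Units.val_inv_eq_inv_val, inv_pow]

lemma radGroup_le (K : Type*) [Field K] {m k : ℕ} :
    radGroup K m ≤ radGroup K (m * k) := by
  rintro x ⟨y, hy⟩
  exact ⟨y ^ k, by rw [map_pow, hy, ← pow_mul]⟩

/-- The group `√[ℓ^∞]{K^×}` of radicals of `ℓ`-power order over `K`. -/
def radInf (K : Type*) [Field K] (ℓ : ℕ) : Subgroup (AlgebraicClosure K)ˣ where
  carrier := {x | ∃ n : ℕ, x ∈ radGroup K (ℓ ^ n)}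
  one_mem' := ⟨0, one_mem _⟩
  mul_mem' := by
    rintro a b ⟨n, ha⟩ ⟨m, hb⟩
    refine ⟨n + m, mul_mem ?_ ?_⟩
    · have h : radGroup K (ℓ ^ n) ≤ radGroup K (ℓ ^ (n + m)) := by
        rw [pow_add]; exact radGroup_le K
      exact h ha
    · have h : radGroup K (ℓ ^ m) ≤ radGroup K (ℓ ^ (n + m)) := by
        rw [add_comm, pow_add]; exact radGroup_le K
      exact h hb
  inv_mem' := by
    rintro a ⟨n, ha⟩
    exact ⟨n, inv_mem ha⟩

/-- The units of the algebraic closure lying in an intermediate field `F`, as a subgroup. -/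
def unitsIn {K : Type*} [Field K] (F : IntermediateField K (AlgebraicClosure K)) :
    Subgroup (AlgebraicClosure K)ˣ where
  carrier := {x | (x : AlgebraicClosure K) ∈ F}
  one_mem' := by
    show ((1 : (AlgebraicClosure K)ˣ) : AlgebraicClosure K) ∈ F
    simpa using one_mem F
  mul_mem' := by
    intro a b ha hb
    show ((a * b : (AlgebraicClosure K)ˣ) : AlgebraicClosure K) ∈ F
    rw [Units.val_mul]
    exact mul_mem ha hb
  inv_mem' := by
    intro x hx
    show ((x⁻¹ : (AlgebraicClosure K)ˣ) : AlgebraicClosure K) ∈ F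
    rw [Units.val_inv_eq_inv_val]
    exact inv_mem hx

/-- `K(ζ_{2𝒫})`: the extension of `K` generated by all roots of unity whose order is `4` or
an odd prime, and not divisible by the characteristic of `K`. -/
def cyclo2P (K : Type*) [Field K] : IntermediateField K (AlgebraicClosure K) :=
  IntermediateField.adjoin K
    {x : AlgebraicClosure K |
      ∃ n : ℕ, (n = 4 ∨ (n.Prime ∧ Odd n)) ∧ ¬ (ringChar K ∣ n) ∧ IsPrimitiveRoot x n}

/-- The set of roots of unity of order exactly `n` in the algebraic closure of `K`. -/
def primRoots (K : Type*) [Field K] (n : ℕ) : Set (AlgebraicClosure K) :=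
  {x | IsPrimitiveRoot x n}

/-- The set of roots of unity of order `ℓ^n` for `n ≤ t` (all of them if `t = ∞`). -/
def pPowRoots (K : Type*) [Field K] (ℓ : ℕ) (t : ℕ∞) : Set (AlgebraicClosure K) :=
  {x | ∃ n : ℕ, (n : ℕ∞) ≤ t ∧ IsPrimitiveRoot x (ℓ ^ n)}

/-- The set of units that are roots of unity of order `ℓ^n` for `n ≤ t`. -/
def pPowRootsUnits (K : Type*) [Field K] (ℓ : ℕ) (t : ℕ∞) : Set (AlgebraicClosure K)ˣ :=
  {x | ∃ n : ℕ, (n : ℕ∞) ≤ t ∧ IsPrimitiveRoot (x : AlgebraicClosure K) (ℓ ^ n)}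


lemma geom_aux {ℓ c : ℕ} (hℓ : ℓ.Prime) (hodd : Odd ℓ) (hc : c ≡ 1 [MOD ℓ]) :
    ¬ ℓ ^ 2 ∣ ∑ i ∈ Finset.range ℓ, c ^ i := by
  intro h
  have h1 : (ℓ : ℤ) ∣ (c : ℤ) - 1 := by
    have := (Nat.modEq_iff_dvd.1 hc.symm)
    simpa using this
  obtain ⟨b, hb⟩ := h1
  have h2 := odd_sq_dvd_geom_sum₂_sub (R := ℤ) (a := 1) (b := b) hodd
  rw [← hb] at h2
  simp only [one_pow, mul_one, add_sub_cancel] at h2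
  have h3 : (ℓ : ℤ) ^ 2 ∣ ∑ i ∈ Finset.range ℓ, (c : ℤ) ^ i := by exact_mod_cast h
  have h4 : (ℓ : ℤ) ^ 2 ∣ (ℓ : ℤ) := by
    have := dvd_sub h3 h2
    simpa using this
  have h5 : ℓ ^ 2 ∣ ℓ := by exact_mod_cast h4
  have := Nat.le_of_dvd hℓ.pos h5
  have := hℓ.two_le
  nlinarith

lemma kummer_aux {F M : Type*} [Field F] [Field M] [Algebra F M] {ℓ : ℕ} (hℓ : ℓ.Prime)
    (hodd : Odd ℓ) {z : F} (hz : IsPrimitiveRoot z ℓ) {a : M} (ha0 : a ≠ 0)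
    (hna : ∀ f : F, algebraMap F M f ≠ a) (hrank : Module.finrank F M = ℓ) {y : F} (ha : a ^ ℓ = algebraMap F M y)
    {b : M} (hb0 : b ≠ 0) {n : ℕ} {w : F} (hb : b ^ (ℓ ^ n) = algebraMap F M w) :
    ∃ (i : ℕ) (f : F), b = algebraMap F M f * a ^ i := by
  have : Fact ℓ.Prime := ⟨hℓ⟩
  have : NeZero ℓ := ⟨hℓ.ne_zero⟩
  have : FiniteDimensional F M := Module.finite_of_finrank_pos (by rw [hrank]; exact hℓ.pos)
  have hsimple := IntermediateField.isSimpleOrder_of_finrank_prime F M (hrank ▸ hℓ)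
  have htop : F⟮a⟯ = ⊤ := by
    rcases eq_bot_or_eq_top (F⟮a⟯) with h | h
    · rw [adjoin_simple_eq_bot_iff, mem_bot] at h
      obtain ⟨f, hf⟩ := h
      exact absurd hf (hna f)
    · exact h
  have hprim : (primitiveRoots (Module.finrank F M) F).Nonempty :=
    ⟨z, by rw [hrank, mem_primitiveRoots hℓ.pos]; exact hz⟩
  have hgal : IsGalois F M :=
    (((isCyclic_tfae F M hprim).out 0 2).2
      (show ∃ α : M, α ^ Module.finrank F M ∈ Set.range (algebraMap F M) ∧ F⟮α⟯ = ⊤ from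
        ⟨a, by rw [hrank]; exact ⟨y, ha.symm⟩, htop⟩) : IsGalois F M ∧ IsCyclic (M ≃ₐ[F] M)).1
  have hcard : Nat.card (M ≃ₐ[F] M) = ℓ := by
    rw [IsGalois.card_aut_eq_finrank, hrank]
  have hnt : Nontrivial (M ≃ₐ[F] M) := by
    apply (Finite.one_lt_card_iff_nontrivial).1; rw [hcard]; exact hℓ.one_lt
  obtain ⟨σ, hσ⟩ := exists_ne (1 : M ≃ₐ[F] M)
  have hgen : ∀ τ : M ≃ₐ[F] M, τ ∈ Subgroup.zpowers σ := fun τ =>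
    mem_zpowers_of_prime_card hcard hσ
  have hfix : ∀ x : M, σ x = x → ∃ f : F, algebraMap F M f = x := by
    intro x hx
    have := (IsGalois.mem_range_algebraMap_iff_fixed (F := F) x).2 (by
      intro τ
      have hle : Subgroup.zpowers σ ≤ MulAction.stabilizer (M ≃ₐ[F] M) x := by
        rw [Subgroup.zpowers_le]; exact hx
      exact hle (hgen τ))
    exact this
  have hzM : IsPrimitiveRoot (algebraMap F M z) ℓ := hz.map_of_injective (algebraMap F M).injective
  have hrootF : ∀ x : M, x ^ ℓ = 1 → σ x = x := by
    intro x hx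
    obtain ⟨i, -, hi⟩ := hzM.eq_pow_of_pow_eq_one hx
    rw [← hi, ← map_pow, AlgEquiv.commutes]
  -- σ a = ζ a
  have hya0 : algebraMap F M y ≠ 0 := by rw [← ha]; exact pow_ne_zero _ ha0
  set ζ := σ a / a with hζ
  have hσa : σ a = ζ * a := by rw [hζ]; field_simp
  have hζℓ : ζ ^ ℓ = 1 := by
    rw [hζ, div_pow, ← map_pow, ha, AlgEquiv.commutes, div_self hya0]
  have hζ1 : ζ ≠ 1 := by
    intro h
    obtain ⟨f, hf⟩ := hfix a (by rw [hσa, h, one_mul])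
    exact hna f hf
  have hζp : IsPrimitiveRoot ζ ℓ := IsPrimitiveRoot.iff_orderOf.2 (orderOf_eq_prime hζℓ hζ1)
  -- σ b = ξ b
  have hwb0 : algebraMap F M w ≠ 0 := by rw [← hb]; exact pow_ne_zero _ hb0
  set ξ := σ b / b with hξ
  have hσb : σ b = ξ * b := by rw [hξ]; field_simp
  have hξn : ξ ^ (ℓ ^ n) = 1 := by
    rw [hξ, div_pow, ← map_pow, hb, AlgEquiv.commutes, div_self hwb0]
  have hξ0 : ξ ≠ 0 := by
    rintro h; rw [h, zero_pow (pow_ne_zero _ hℓ.ne_zero)] at hξn; exact zero_ne_one hξn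
  have hξℓ : ξ ^ ℓ = 1 := by
    have : NeZero (ℓ ^ n) := ⟨pow_ne_zero _ hℓ.ne_zero⟩
    obtain ⟨c, hc⟩ := map_rootsOfUnity_eq_pow_self σ (rootsOfUnity.mkOfPowEq ξ hξn)
    simp only [rootsOfUnity.coe_mkOfPowEq] at hc
    have hck : ∀ k : ℕ, (σ ^ k) b = ξ ^ (∑ i ∈ Finset.range k, c ^ i) * b := by
      intro k
      induction k with
      | zero => simp
      | succ k ih =>
        rw [pow_succ', AlgEquiv.mul_apply, ih, map_mul, map_pow, hc, hσb, ← mul_assoc,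
          ← pow_mul, ← pow_succ, Finset.sum_range_succ', pow_zero, Finset.mul_sum]
        simp only [pow_succ']
    have hℓb := hck ℓ
    have hσℓ : σ ^ ℓ = 1 := by rw [← hcard]; exact pow_card_eq_one'
    rw [hσℓ, AlgEquiv.one_apply] at hℓb
    have hS : ξ ^ (∑ i ∈ Finset.range ℓ, c ^ i) = 1 :=
      (mul_right_cancel₀ hb0 ((one_mul b).trans hℓb)).symm
    obtain ⟨j, hj, hord⟩ := (Nat.dvd_prime_pow hℓ).1 (orderOf_dvd_of_pow_eq_one hξn)
    rcases j with _ | j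
    · rw [pow_zero, orderOf_eq_one_iff] at hord; rw [hord, one_pow]
    have hc1 : c ≡ 1 [MOD ℓ] := by
      have h1 : (ξ ^ (ℓ ^ j)) ^ ℓ = 1 := by
        rw [← pow_mul, ← pow_succ, ← hord, pow_orderOf_eq_one]
      have h2 := hrootF _ h1
      rw [map_pow, hc, ← pow_mul, IsOfFinOrder.pow_eq_pow_iff_modEq
        (orderOf_pos_iff.1 (by rw [hord]; exact pow_pos hℓ.pos _)), hord] at h2
      have h3 : ℓ ^ j * c ≡ ℓ ^ j * 1 [MOD ℓ ^ j * ℓ] := by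
        rw [← pow_succ, mul_one, mul_comm]; exact h2
      exact Nat.ModEq.mul_left_cancel' (pow_ne_zero _ hℓ.ne_zero) h3
    have hnd := geom_aux hℓ hodd hc1
    have hd := orderOf_dvd_of_pow_eq_one hS
    rw [hord] at hd
    rcases j with _ | j
    · rw [zero_add, pow_one] at hord; rw [← hord, pow_orderOf_eq_one]
    · exact absurd ((pow_dvd_pow ℓ (by omega)).trans hd) hnd
  obtain ⟨i, -, hi⟩ := hζp.eq_pow_of_pow_eq_one hξℓ
  obtain ⟨f, hf⟩ := hfix (b / a ^ i) (by
    rw [map_div₀, map_pow, hσa, hσb, mul_pow, hi, mul_div_mul_left _ _ hξ0])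
  exact ⟨i, f, by rw [hf]; field_simp⟩

lemma mem_unitsIn {K : Type*} [Field K] {F : IntermediateField K (AlgebraicClosure K)}
    {x : (AlgebraicClosure K)ˣ} : x ∈ unitsIn F ↔ (x : AlgebraicClosure K) ∈ F := Iff.rfl

lemma unitsIn_mono {K : Type*} [Field K] {F E : IntermediateField K (AlgebraicClosure K)}
    (h : F ≤ E) : unitsIn F ≤ unitsIn E := fun _ hx => h hx

lemma unitsIn_bot (K : Type*) [Field K] : unitsIn (⊥ : IntermediateField K _) = baseUnits K := by
  ext x
  rw [mem_unitsIn, mem_bot]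
  constructor
  · rintro ⟨y, hy⟩
    have hy0 : y ≠ 0 := by
      rintro rfl
      rw [map_zero] at hy
      exact x.ne_zero hy.symm
    exact ⟨Units.mk0 y hy0, Units.ext hy⟩
  · rintro ⟨y, rfl⟩
    exact ⟨y, rfl⟩

/-- degree of a Kummer step -/
lemma finrank_step {F L : Type*} [Field F] [Field L] [Algebra F L] {ℓ : ℕ} (hℓ : ℓ.Prime)
    {z : F} (hz : IsPrimitiveRoot z ℓ) {a : L} (hna : ∀ f : F, algebraMap F L f ≠ a)
    {y : F} (ha : a ^ ℓ = algebraMap F L y) : Module.finrank F F⟮a⟯ = ℓ := by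
  have : NeZero ℓ := ⟨hℓ.ne_zero⟩
  have hzL : IsPrimitiveRoot (algebraMap F L z) ℓ := hz.map_of_injective (algebraMap F L).injective
  have ha0 : a ≠ 0 := by rintro rfl; exact hna 0 (map_zero _)
  have hirr : Irreducible (Polynomial.X ^ ℓ - Polynomial.C y) := by
    apply X_pow_sub_C_irreducible_of_prime hℓ
    intro b hb
    have hb0 : algebraMap F L b ≠ 0 := by
      intro h
      have : a ^ ℓ = 0 := by rw [ha, ← hb, map_pow, h, zero_pow hℓ.ne_zero]
      exact ha0 (pow_eq_zero_iff hℓ.ne_zero |>.1 this)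
    have h1 : (a / algebraMap F L b) ^ ℓ = 1 := by
      rw [div_pow, ha, ← map_pow, hb, div_self]
      rw [← hb, map_pow]; exact pow_ne_zero _ hb0
    obtain ⟨i, -, hi⟩ := hzL.eq_pow_of_pow_eq_one h1
    apply hna (z ^ i * b)
    rw [map_mul, map_pow, hi, div_mul_cancel₀ _ hb0]
  have hmin : Polynomial.X ^ ℓ - Polynomial.C y = minpoly F a :=
    minpoly.eq_of_irreducible_of_monic hirr (by simp [ha])
      (Polynomial.monic_X_pow_sub_C y hℓ.ne_zero)
  have hint : IsIntegral F a := by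
    refine ⟨_, Polynomial.monic_X_pow_sub_C y hℓ.ne_zero, ?_⟩
    simp [ha]
  rw [adjoin.finrank hint, ← hmin, Polynomial.natDegree_X_pow_sub_C]

theorem kneser_aux {K : Type*} [Field K] {ℓ : ℕ} (hℓ : ℓ.Prime) (hodd : Odd ℓ) {z : K}
    (hz : IsPrimitiveRoot z ℓ) (Γ : Subgroup (AlgebraicClosure K)ˣ) (m : ℕ) :
    ∀ F : IntermediateField K (AlgebraicClosure K), (unitsIn F).relIndex Γ = ℓ ^ m →
      relfinrank F (F ⊔ adjoin K (Units.val '' (Γ : Set (AlgebraicClosure K)ˣ))) = ℓ ^ m := by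
  have : Fact ℓ.Prime := ⟨hℓ⟩
  induction m with
  | zero =>
    intro F h
    rw [pow_zero, Subgroup.relIndex_eq_one] at h
    rw [pow_zero, relfinrank_eq_one_iff, sup_le_iff, adjoin_le_iff]
    refine ⟨le_rfl, ?_⟩
    rintro _ ⟨x, hx, rfl⟩
    exact h hx
  | succ m ih =>
    intro F h
    -- find `a`
    obtain ⟨a, haΓ, haF, haℓ⟩ : ∃ a : (AlgebraicClosure K)ˣ, a ∈ Γ ∧ a ∉ unitsIn F ∧
        a ^ ℓ ∈ unitsIn F := by
      have hc : Nat.card (Γ ⧸ (unitsIn F).subgroupOf Γ) = ℓ ^ (m + 1) := h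
      have : Finite (Γ ⧸ (unitsIn F).subgroupOf Γ) :=
        Nat.finite_of_card_ne_zero (by rw [hc]; exact pow_ne_zero _ hℓ.ne_zero)
      obtain ⟨q, hq⟩ := exists_prime_orderOf_dvd_card' (G := Γ ⧸ (unitsIn F).subgroupOf Γ) ℓ
        (by rw [hc]; exact dvd_pow_self _ (Nat.succ_ne_zero m))
      obtain ⟨a, rfl⟩ := QuotientGroup.mk_surjective q
      refine ⟨a, a.2, ?_, ?_⟩
      · intro ha
        have : (a : Γ ⧸ (unitsIn F).subgroupOf Γ) = 1 :=
          (QuotientGroup.eq_one_iff a).2 (Subgroup.mem_subgroupOf.2 ha)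
        rw [this, orderOf_one] at hq
        exact hℓ.one_lt.ne hq
      · have h1 := pow_orderOf_eq_one (a : Γ ⧸ (unitsIn F).subgroupOf Γ)
        rw [hq, ← QuotientGroup.mk_pow, QuotientGroup.eq_one_iff, Subgroup.mem_subgroupOf] at h1
        exact h1
    have hzF : IsPrimitiveRoot (algebraMap K F z) ℓ :=
      hz.map_of_injective (algebraMap K F).injective
    have hna : ∀ f : F, algebraMap F (AlgebraicClosure K) f ≠ (a : AlgebraicClosure K) := by
      rintro f hf
      apply haF
      rw [mem_unitsIn, ← hf]
      exact f.2
    obtain ⟨y, hy⟩ : ∃ y : F, (a : AlgebraicClosure K) ^ ℓ = algebraMap F (AlgebraicClosure K) y :=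
      ⟨⟨_, haℓ⟩, by simp⟩
    have hrank := finrank_step hℓ hzF hna hy
    set F₁ : IntermediateField K (AlgebraicClosure K) :=
      restrictScalars K F⟮(a : AlgebraicClosure K)⟯ with hF₁
    have hFF₁ : F ≤ F₁ := by
      intro x hx
      exact F⟮(a : AlgebraicClosure K)⟯.algebraMap_mem ⟨x, hx⟩
    have haF₁ : (a : AlgebraicClosure K) ∈ F₁ := mem_adjoin_simple_self F _
    have hF₁le : F₁ ≤ F ⊔ adjoin K (Units.val '' (Γ : Set (AlgebraicClosure K)ˣ)) := by
      have hle : F⟮(a : AlgebraicClosure K)⟯ ≤ extendScalars (le_sup_left :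
          F ≤ F ⊔ adjoin K (Units.val '' (Γ : Set (AlgebraicClosure K)ˣ))) := by
        rw [adjoin_simple_le_iff, mem_extendScalars]
        exact (le_sup_right : adjoin K (Units.val '' (Γ : Set (AlgebraicClosure K)ˣ)) ≤ _)
          (subset_adjoin _ _ ⟨a, haΓ, rfl⟩)
      exact hle
    have hrel : relfinrank F F₁ = ℓ := by
      rw [relfinrank_eq_finrank_of_le hFF₁]
      exact hrank
    have hkey : ∀ b ∈ unitsIn F₁ ⊓ Γ, ∃ i : ℕ, b * (a ^ i)⁻¹ ∈ unitsIn F := by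
      rintro b ⟨hbF₁, hbΓ⟩
      have hbp := Subgroup.pow_relIndex_mem (unitsIn F) hbΓ
      rw [h] at hbp
      obtain ⟨i, f, hf⟩ := kummer_aux (F := F) (M := F⟮(a : AlgebraicClosure K)⟯) hℓ hodd hzF
        (a := ⟨a, haF₁⟩) (by intro h0; exact a.ne_zero (congrArg Subtype.val h0))
        (by intro f hf; exact hna f (congrArg Subtype.val hf)) hrank
        (y := y) (Subtype.ext hy) (b := ⟨b, hbF₁⟩)
        (by intro h0; exact b.ne_zero (congrArg Subtype.val h0)) (n := m + 1)
        (w := ⟨_, hbp⟩) (Subtype.ext (by simp))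
      refine ⟨i, ?_⟩
      have hf' : (b : AlgebraicClosure K) = (f : AlgebraicClosure K) * (a : AlgebraicClosure K) ^ i :=
        congrArg Subtype.val hf
      rw [mem_unitsIn, Units.val_mul, Units.val_inv_eq_inv_val, Units.val_pow_eq_pow_val, hf',
        mul_inv_cancel_right₀ (pow_ne_zero _ a.ne_zero)]
      exact f.2
    have hstep : (unitsIn F).relIndex (unitsIn F₁ ⊓ Γ) = ℓ := by
      set N := unitsIn F₁ ⊓ Γ with hN
      let aN : N := ⟨a, haF₁, haΓ⟩
      have hord : orderOf (aN : N ⧸ (unitsIn F).subgroupOf N) = ℓ := by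
        apply orderOf_eq_prime
        · rw [← QuotientGroup.mk_pow, QuotientGroup.eq_one_iff, Subgroup.mem_subgroupOf]
          exact haℓ
        · rw [Ne, QuotientGroup.eq_one_iff, Subgroup.mem_subgroupOf]
          exact haF
      have hgen : ∀ q : N ⧸ (unitsIn F).subgroupOf N,
          q ∈ Subgroup.zpowers (aN : N ⧸ (unitsIn F).subgroupOf N) := by
        intro q
        obtain ⟨b, rfl⟩ := QuotientGroup.mk_surjective q
        obtain ⟨i, hi⟩ := hkey b b.2
        refine ⟨i, ?_⟩
        simp only [zpow_natCast]
        rw [← QuotientGroup.mk_pow, QuotientGroup.eq, Subgroup.mem_subgroupOf]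
        rw [mul_comm] at hi
        exact hi
      exact (orderOf_eq_card_of_forall_mem_zpowers hgen).symm.trans hord
    have hmul := Subgroup.relIndex_inf_mul_relIndex (unitsIn F) (unitsIn F₁) Γ
    rw [inf_eq_left.2 (unitsIn_mono hFF₁), hstep, h, pow_succ', Nat.mul_right_inj hℓ.ne_zero] at hmul
    have ih' := ih F₁ hmul
    have hsup : F₁ ⊔ adjoin K (Units.val '' (Γ : Set (AlgebraicClosure K)ˣ)) =
        F ⊔ adjoin K (Units.val '' (Γ : Set (AlgebraicClosure K)ˣ)) :=
      le_antisymm (sup_le hF₁le le_sup_right) (sup_le_sup_right hFF₁ _)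
    rw [hsup] at ih'
    rw [← relfinrank_mul_relfinrank hFF₁ hF₁le, hrel, ih', pow_succ']

/-- Theorem 4.1 (main part): let `ℓ` be an odd prime different from `char K` with `ζ_ℓ ∈ K`,
and `Γ_{ℓ,E} := Γ_ℓ ∩ K(W_ℓ)^×`. Then `K(Γ_ℓ) ∩ K(W_ℓ) = K(Γ_{ℓ,E})` and
`[K(Γ):K] = |Γ_ℓ : K^×| ⬝ [K(W_ℓ):K] / |Γ_{ℓ,E} : K^×|`. -/
theorem stmt6 (K : Type*) [Field K] (ℓ : ℕ) (hℓ : ℓ.Prime) (hℓodd : Odd ℓ)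
    (hchar : ringChar K ≠ ℓ) (hζℓ : ∃ z : K, IsPrimitiveRoot z ℓ)
    (W : Subgroup (AlgebraicClosure K)ˣ)
    (hW : ∃ S : Set (AlgebraicClosure K)ˣ, S.Finite ∧
      (∀ x ∈ S, ∃ q : ℕ, q.Prime ∧ Odd q ∧ q ≠ ℓ ∧ q ≠ ringChar K ∧
        IsPrimitiveRoot (x : AlgebraicClosure K) q) ∧ W = Subgroup.closure S)
    (Γℓ : Subgroup (AlgebraicClosure K)ˣ) (hΓK : baseUnits K ≤ Γℓ)
    (hidx : ∃ m : ℕ, Subgroup.relIndex (baseUnits K) Γℓ = ℓ ^ m) :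
    IntermediateField.adjoin K (Units.val '' (Γℓ : Set (AlgebraicClosure K)ˣ)) ⊓
        IntermediateField.adjoin K (Units.val '' (W : Set (AlgebraicClosure K)ˣ)) =
      IntermediateField.adjoin K (Units.val ''
        ((Γℓ ⊓ unitsIn (IntermediateField.adjoin K
          (Units.val '' (W : Set (AlgebraicClosure K)ˣ)))) : Set (AlgebraicClosure K)ˣ)) ∧
    Module.finrank K (IntermediateField.adjoin K
        (Units.val '' ((baseUnits K ⊔ W ⊔ Γℓ) : Set (AlgebraicClosure K)ˣ))) *
      Subgroup.relIndex (baseUnits K) (Γℓ ⊓ unitsIn (IntermediateField.adjoin K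
        (Units.val '' (W : Set (AlgebraicClosure K)ˣ)))) =
    Subgroup.relIndex (baseUnits K) Γℓ *
      Module.finrank K (IntermediateField.adjoin K
        (Units.val '' (W : Set (AlgebraicClosure K)ˣ))) := by
  obtain ⟨z, hz⟩ := hζℓ
  obtain ⟨m, hm⟩ := hidx
  set E := adjoin K (Units.val '' (W : Set (AlgebraicClosure K)ˣ)) with hE
  set L := adjoin K (Units.val '' (Γℓ : Set (AlgebraicClosure K)ˣ)) with hL
  have hpow : ∀ G : Subgroup (AlgebraicClosure K)ˣ, G ≤ Γℓ → baseUnits K ≤ G →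
      ∀ F : IntermediateField K (AlgebraicClosure K),
      ∃ k, (unitsIn F).relIndex G = ℓ ^ k := by
    intro G hG hKG F
    have h1 : (unitsIn F).relIndex G ∣ (baseUnits K).relIndex G := by
      rw [← unitsIn_bot]
      exact Subgroup.relIndex_dvd_of_le_left _ (unitsIn_mono bot_le)
    have h2 : (baseUnits K).relIndex G ∣ (baseUnits K).relIndex Γℓ :=
      Dvd.intro _ (Subgroup.relIndex_mul_relIndex _ _ _ hKG hG)
    obtain ⟨k, -, hk⟩ := (Nat.dvd_prime_pow hℓ).1 (hm ▸ h1.trans h2)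
    exact ⟨k, hk⟩
  have hkn : ∀ G : Subgroup (AlgebraicClosure K)ˣ, G ≤ Γℓ → baseUnits K ≤ G →
      ∀ F : IntermediateField K (AlgebraicClosure K),
      relfinrank F (F ⊔ adjoin K (Units.val '' (G : Set (AlgebraicClosure K)ˣ))) =
        (unitsIn F).relIndex G := by
    intro G hG hKG F
    obtain ⟨k, hk⟩ := hpow G hG hKG F
    rw [hk]
    exact kneser_aux hℓ hℓodd hz G k F hk
  have hbase : ∀ G : Subgroup (AlgebraicClosure K)ˣ, G ≤ Γℓ → baseUnits K ≤ G →
      Module.finrank K (adjoin K (Units.val '' (G : Set (AlgebraicClosure K)ˣ))) =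
        (baseUnits K).relIndex G := by
    intro G hG hKG
    rw [← unitsIn_bot, ← hkn G hG hKG ⊥, bot_sup_eq, relfinrank_bot_left]
  have hKE : baseUnits K ≤ unitsIn E := by
    rw [← unitsIn_bot]; exact unitsIn_mono bot_le
  -- index multiplicativity
  have hidxmul : (baseUnits K).relIndex (Γℓ ⊓ unitsIn E) * (unitsIn E).relIndex Γℓ =
      (baseUnits K).relIndex Γℓ := by
    rw [inf_comm, Subgroup.relIndex_inf_mul_relIndex, inf_eq_left.2 hKE]
  have hΓE : (unitsIn E).relIndex Γℓ ≠ 0 := by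
    obtain ⟨k, hk⟩ := hpow Γℓ le_rfl hΓK E
    rw [hk]; exact pow_ne_zero _ hℓ.ne_zero
  constructor
  · have hfin : Module.finrank K L = ℓ ^ m := (hbase Γℓ le_rfl hΓK).trans hm
    have hfd : FiniteDimensional K L :=
      Module.finite_of_finrank_pos (by rw [hfin]; exact pow_pos hℓ.pos _)
    have hle : adjoin K (Units.val '' ((Γℓ ⊓ unitsIn E : Subgroup (AlgebraicClosure K)ˣ) :
        Set (AlgebraicClosure K)ˣ)) ≤ L ⊓ E := by
      rw [adjoin_le_iff]
      rintro _ ⟨x, ⟨hx1, hx2⟩, rfl⟩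
      exact ⟨subset_adjoin _ _ ⟨x, hx1, rfl⟩, hx2⟩
    have hfd2 : FiniteDimensional K (L ⊓ E : IntermediateField K (AlgebraicClosure K)) :=
      FiniteDimensional.of_injective (inclusion (inf_le_left : L ⊓ E ≤ L)).toLinearMap
        (inclusion_injective (inf_le_left : L ⊓ E ≤ L))
    have h1 := hkn Γℓ le_rfl hΓK (L ⊓ E)
    rw [← hL, sup_eq_right.2 inf_le_left] at h1
    have h2 : (unitsIn (L ⊓ E)).relIndex Γℓ = (unitsIn E).relIndex Γℓ := by
      rw [← Subgroup.inf_relIndex_right, ← Subgroup.inf_relIndex_right (unitsIn E)]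
      congr 1
      ext x
      constructor
      · rintro ⟨hx, hx'⟩; exact ⟨hx.2, hx'⟩
      · rintro ⟨hx, hx'⟩; exact ⟨⟨subset_adjoin _ _ ⟨x, hx', rfl⟩, hx⟩, hx'⟩
    have h3 := finrank_bot_mul_relfinrank (inf_le_left : L ⊓ E ≤ L)
    rw [h1, h2, hbase Γℓ le_rfl hΓK, ← hidxmul] at h3
    have h4 := Nat.eq_of_mul_eq_mul_right (Nat.pos_of_ne_zero hΓE) h3
    exact (eq_of_le_of_finrank_eq hle ((hbase _ inf_le_left (le_inf hΓK hKE)).trans h4.symm)).symm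
  · have hsup : adjoin K (Units.val '' ((baseUnits K ⊔ W ⊔ Γℓ) : Set (AlgebraicClosure K)ˣ)) =
        E ⊔ L := by
      apply le_antisymm
      · rw [adjoin_le_iff]
        rintro _ ⟨x, (hx | hx) | hx, rfl⟩
        · exact (le_sup_left : E ≤ E ⊔ L) (hKE hx)
        · exact (le_sup_left : E ≤ E ⊔ L) (subset_adjoin _ _ ⟨x, hx, rfl⟩)
        · exact (le_sup_right : L ≤ E ⊔ L) (subset_adjoin _ _ ⟨x, hx, rfl⟩)
      · refine sup_le (adjoin.mono _ _ _ (Set.image_mono ?_)) (adjoin.mono _ _ _ (Set.image_mono ?_))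
        · intro x hx; exact Or.inl (Or.inr hx)
        · intro x hx; exact Or.inr hx
    rw [hsup, ← finrank_bot_mul_relfinrank (le_sup_left : E ≤ E ⊔ L), hkn Γℓ le_rfl hΓK E, ← hidxmul]
    ring

end
end

section
/- Let ℓ be an odd prime different from char(K) with ζ_ℓ ∈ K, and set Γ_{ℓ,E} := Γ_ℓ ∩ K(W_ℓ)^×. Suppose additionally that every root of unity of order a power of ℓ lying in K(W_ℓ) already lies in K. Then K(Γ_{ℓ,E})/K is a Kummer extension: for every α ∈ Γ_{ℓ,E}, if n is the smallest non-negative integer with α^(ℓ^n) ∈ K, then ζ_{ℓ^n} ∈ K. -/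
noncomputable section

open IntermediateField

/-- Theorem 4.1 (Kummer part): with `ℓ` an odd prime different from `char K`, `ζ_ℓ ∈ K`, and
assuming every `ℓ`-power order root of unity in `K(W_ℓ)` lies in `K`, the extension
`K(Γ_{ℓ,E})/K` is Kummer: for `α ∈ Γ_{ℓ,E}`, if `n` is minimal with `α^(ℓ^n) ∈ K^×`,
then `ζ_{ℓ^n} ∈ K`. -/
theorem stmt7 (K : Type*) [Field K] (ℓ : ℕ) (hℓ : ℓ.Prime) (hℓodd : Odd ℓ)
    (hchar : ringChar K ≠ ℓ) (hζℓ : ∃ z : K, IsPrimitiveRoot z ℓ)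
    (W : Subgroup (AlgebraicClosure K)ˣ)
    (hW : ∃ S : Set (AlgebraicClosure K)ˣ, S.Finite ∧
      (∀ x ∈ S, ∃ q : ℕ, q.Prime ∧ Odd q ∧ q ≠ ℓ ∧ q ≠ ringChar K ∧
        IsPrimitiveRoot (x : AlgebraicClosure K) q) ∧ W = Subgroup.closure S)
    (Γℓ : Subgroup (AlgebraicClosure K)ˣ) (hΓK : baseUnits K ≤ Γℓ)
    (hidx : ∃ m : ℕ, Subgroup.relIndex (baseUnits K) Γℓ = ℓ ^ m)
    (hroots : ∀ (x : AlgebraicClosure K) (k : ℕ), IsPrimitiveRoot x (ℓ ^ k) →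
      x ∈ IntermediateField.adjoin K (Units.val '' (W : Set (AlgebraicClosure K)ˣ)) →
      ∃ y : K, algebraMap K (AlgebraicClosure K) y = x) :
    ∀ α ∈ Γℓ ⊓ unitsIn (IntermediateField.adjoin K
        (Units.val '' (W : Set (AlgebraicClosure K)ˣ))),
      ∀ n : ℕ, α ^ (ℓ ^ n) ∈ baseUnits K → (∀ m < n, α ^ (ℓ ^ m) ∉ baseUnits K) →
        ∃ z : K, IsPrimitiveRoot z (ℓ ^ n) := by
  obtain ⟨S, -, hS, rfl⟩ := hW
  set E := IntermediateField.adjoin K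
    (Units.val '' (Subgroup.closure S : Set (AlgebraicClosure K)ˣ)) with hE
  have hWtors : ∀ w ∈ Subgroup.closure S, ∃ N : ℕ, (N : K) ≠ 0 ∧ w ^ N = 1 := by
    intro w hw
    induction hw using Subgroup.closure_induction with
    | mem x hx =>
      obtain ⟨q, hq, -, -, hqc, hprim⟩ := hS x hx
      refine ⟨q, ?_, ?_⟩
      · intro h0
        have hd := (ringChar.spec K q).1 h0
        rcases (Nat.dvd_prime hq).1 hd with h | h
        · exact CharP.ringChar_ne_one h
        · exact hqc h.symm
      · apply Units.ext
        simpa using hprim.pow_eq_one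
    | one => exact ⟨1, by simp, by simp⟩
    | mul x y _ _ hx hy =>
      obtain ⟨N, hN, hxN⟩ := hx
      obtain ⟨M, hM, hyM⟩ := hy
      refine ⟨N * M, by push_cast; exact mul_ne_zero hN hM, ?_⟩
      rw [mul_pow, pow_mul, hxN, mul_comm N M, pow_mul, hyM]; simp
    | inv x _ hx =>
      obtain ⟨N, hN, hxN⟩ := hx
      exact ⟨N, hN, by rw [inv_pow, hxN, inv_one]⟩
  have hsep : Algebra.IsSeparable K E := by
    rw [hE, IntermediateField.isSeparable_adjoin_iff_isSeparable]
    rintro _ ⟨w, hw, rfl⟩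
    obtain ⟨N, hN, hwN⟩ := hWtors w hw
    have h1 : (Polynomial.X ^ N - Polynomial.C (1 : K)).Separable :=
      Polynomial.separable_X_pow_sub_C 1 hN one_ne_zero
    refine h1.of_dvd (minpoly.dvd K _ ?_)
    have : (w : AlgebraicClosure K) ^ N = 1 := by
      rw [← Units.val_pow_eq_pow_val, hwN, Units.val_one]
    simp [this]
  have hnorm : Normal K E := by
    rw [IntermediateField.normal_iff_forall_map_le]
    intro σ
    rw [hE, IntermediateField.adjoin_map, IntermediateField.adjoin_le_iff]
    rintro _ ⟨_, ⟨w, hw, rfl⟩, rfl⟩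
    obtain ⟨N, hN, hwN⟩ := hWtors w hw
    have hN0 : N ≠ 0 := by rintro rfl; simp at hN
    have hfin : IsOfFinOrder w := isOfFinOrder_iff_pow_eq_one.2 ⟨N, Nat.pos_of_ne_zero hN0, hwN⟩
    have hprim : IsPrimitiveRoot (w : AlgebraicClosure K) (orderOf w) :=
      IsPrimitiveRoot.coe_units_iff.2 (IsPrimitiveRoot.orderOf w)
    have hpow : σ (w : AlgebraicClosure K) ^ orderOf w = 1 := by
      rw [← map_pow, hprim.pow_eq_one, map_one]
    haveI : NeZero (orderOf w) := ⟨hfin.orderOf_pos.ne'⟩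
    obtain ⟨i, -, hi⟩ := hprim.eq_pow_of_pow_eq_one hpow
    have hmem : (w : AlgebraicClosure K) ∈ IntermediateField.adjoin K
        (Units.val '' (Subgroup.closure S : Set (AlgebraicClosure K)ˣ)) :=
      IntermediateField.subset_adjoin _ _ ⟨w, hw, rfl⟩
    have := pow_mem hmem i
    rw [hi] at this
    exact this
  haveI : IsGalois K E := ⟨⟩
  rintro α ⟨-, hαE⟩ n hn hmin
  rcases n with _ | n
  · exact ⟨1, by simp⟩
  have hαE' : (α : AlgebraicClosure K) ∈ E := hαE
  have hα0 : (α : AlgebraicClosure K) ≠ 0 := α.ne_zero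
  obtain ⟨u, hu⟩ := hn
  have hu' : algebraMap K (AlgebraicClosure K) u = (α : AlgebraicClosure K) ^ ℓ ^ (n + 1) := by
    have := congrArg Units.val hu
    simpa using this
  set a : E := ⟨α, hαE'⟩ with ha
  have ha0 : a ≠ 0 := by
    intro h
    exact hα0 (congrArg Subtype.val h)
  have hua : algebraMap K E u = a ^ ℓ ^ (n + 1) := by
    apply Subtype.ext
    simpa using hu'
  have hex : ∃ σ : E ≃ₐ[K] E, (σ a / a) ^ ℓ ^ n ≠ 1 := by
    by_contra! hall
    have hbot : a ^ ℓ ^ n ∈ (⊥ : IntermediateField K E) := by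
      rw [InfiniteGalois.mem_bot_iff_fixed]
      intro σ
      have h := hall σ
      rw [div_pow, div_eq_one_iff_eq (pow_ne_zero _ ha0)] at h
      rw [map_pow, h]
    obtain ⟨y, hy⟩ := IntermediateField.mem_bot.1 hbot
    have hy' : algebraMap K (AlgebraicClosure K) y = (α : AlgebraicClosure K) ^ ℓ ^ n := by
      have := congrArg Subtype.val hy
      simpa using this
    have hy0 : y ≠ 0 := by
      rintro rfl
      rw [map_zero] at hy'
      exact pow_ne_zero _ hα0 hy'.symm
    refine hmin n (Nat.lt_succ_self n) ⟨Units.mk0 y hy0, ?_⟩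
    apply Units.ext
    simpa using hy'
  obtain ⟨σ, hσ⟩ := hex
  have hσ1 : (σ a / a) ^ ℓ ^ (n + 1) = 1 := by
    rw [div_pow, ← map_pow, ← hua, AlgEquiv.commutes, div_self]
    rw [hua]
    exact pow_ne_zero _ ha0
  haveI : Fact ℓ.Prime := ⟨hℓ⟩
  have hord := orderOf_eq_prime_pow hσ hσ1
  have hprim : IsPrimitiveRoot (σ a / a) (ℓ ^ (n + 1)) := by
    rw [← hord]
    exact IsPrimitiveRoot.orderOf _
  have hprim' : IsPrimitiveRoot ((σ a / a : E) : AlgebraicClosure K) (ℓ ^ (n + 1)) :=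
    hprim.map_of_injective (f := algebraMap E (AlgebraicClosure K))
      (algebraMap E (AlgebraicClosure K)).injective
  obtain ⟨z, hz⟩ := hroots _ _ hprim' (σ a / a).2
  refine ⟨z, ?_⟩
  rw [← hz] at hprim'
  exact hprim'.of_map_of_injective (algebraMap K (AlgebraicClosure K)).injective

end
end
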